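/- Comparison for large translations: Let f : [−1, 1] → ℝ be continuous and suppose there exists δ > 0 such that f is nonincreasing on [−1, −1+δ] and nonincreasing on [1−δ, 1]. Let u ∈ L_{2s} ∩ C^{1,1}_loc(ℝ^n) satisfy (-Δ)^s u(x) = f(u(x)) for all x ∈ ℝ^n, |u(x)| ≤ 1 for all x ∈ ℝ^n, and u(x', x_n) → ±1 as x_n → ±∞, uniformly in x' ∈ ℝ^{n−1}. Then there exists T > 0 such that for every τ ≥ T and every x = (x', x_n) ∈ ℝ^n, u(x', x_n + τ) ≥ u(x', x_n). -/

import Mathlib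

open MeasureTheory Filter Metric Set

noncomputable section

/-- Points of ℝⁿ with the Euclidean norm. -/
abbrev Pt (n : ℕ) := EuclideanSpace ℝ (Fin n)

/-- The space `L_{2s}`: locally integrable functions `u` with
`∫ |u(x)|/(1+|x|^{n+2s}) dx < ∞`. -/
def MemL2s (n : ℕ) (s : ℝ) (u : Pt n → ℝ) : Prop :=
  LocallyIntegrable u volume ∧
    Integrable (fun x : Pt n => |u x| / (1 + ‖x‖ ^ ((n : ℝ) + 2 * s))) volume

/-- `u` is locally `C^{1,1}` on the open set `D`. -/
def C11loc (n : ℕ) (u : Pt n → ℝ) (D : Set (Pt n)) : Prop :=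
  ∀ x ∈ D, ∃ ε > 0, ball x ε ⊆ D ∧ DifferentiableOn ℝ u (ball x ε) ∧
    ∃ K : NNReal, LipschitzOnWith K (fun y => fderivWithin ℝ u (ball x ε) y) (ball x ε)

/-- `(-Δ)^s u (x) = L`, with the principal value defined as the limit, as `ε → 0⁺`, of
`C_{n,s} ∫_{ℝⁿ \ B_ε(x)} (u(x) - u(y))/|x-y|^{n+2s} dy`. -/
def HasFracLap (n : ℕ) (s Cns : ℝ) (u : Pt n → ℝ) (x : Pt n) (L : ℝ) : Prop :=
  Tendsto (fun ε : ℝ =>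
      Cns * ∫ y in {y : Pt n | ε ≤ dist x y}, (u x - u y) / dist x y ^ ((n : ℝ) + 2 * s))
    (nhdsWithin 0 (Set.Ioi 0)) (nhds L)

/-- The index of the last coordinate (`x_n`). -/
def lastIdx (n : ℕ) (hn : 0 < n) : Fin n := ⟨n - 1, Nat.sub_lt hn Nat.one_pos⟩

/-- The unit vector `e_n` in the `x_n` direction. -/
def eN (n : ℕ) (hn : 0 < n) : Pt n := EuclideanSpace.single (lastIdx n hn) 1

open Topology Module

/-!
The difference `w x = u x - u (x + v)` satisfies `(-Δ)^s w ≤ 0` wherever `w > 0` once `v_n` is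
large: at such a point one of `u x`, `u (x + v)` is close to `-1` or to `1`, hence so are both, and
`f` is nonincreasing there. Moreover `w → 0` as `|x_n| → ∞`. A bounded function with these two
properties is nonpositive. Otherwise let `A = sup w > 0`. A perturbation by a small bump makes `w`
touch its supremum at some `z`, up to `ε`, with second differences bounded above by
`2 ε min(|h|², 1)`. For `h` in a fixed half-space, however, `w (z + h) ≤ A / 2`, so the singular
integral defining `(-Δ)^s w z` is at least a fixed multiple of `A` minus `O(ε)`, which is positive.
-/

section SecondDifference

variable {E : Type*} [NormedAddCommGroup E]

/-- The truncated paraboloid `max (1 - |y|²) 0`, the bump used to turn an almost maximum into a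
maximum. It is only Lipschitz, but semiconvexity is all that is needed of it. -/
def paraboloidCap (y : E) : ℝ := max (1 - ‖y‖ ^ 2) 0

lemma continuous_paraboloidCap : Continuous (paraboloidCap : E → ℝ) := by
  unfold paraboloidCap
  fun_prop

lemma paraboloidCap_zero : paraboloidCap (0 : E) = 1 := by simp [paraboloidCap]

lemma paraboloidCap_nonneg (y : E) : 0 ≤ paraboloidCap y := le_max_right _ _

lemma paraboloidCap_le_one (y : E) : paraboloidCap y ≤ 1 :=
  max_le (sub_le_self _ (sq_nonneg _)) zero_le_one

lemma paraboloidCap_eq_zero {y : E} (hy : 1 ≤ ‖y‖) : paraboloidCap y = 0 :=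
  max_eq_right (sub_nonpos.2 (one_le_pow₀ hy))

variable [InnerProductSpace ℝ E]

lemma paraboloidCap_second_difference_le (y h : E) :
    2 * paraboloidCap y - paraboloidCap (y + h) - paraboloidCap (y - h) ≤
      2 * min (‖h‖ ^ 2) 1 := by
  have hadd := paraboloidCap_nonneg (y + h)
  have hsub := paraboloidCap_nonneg (y - h)
  rw [mul_min_of_nonneg _ _ zero_le_two]
  refine le_min ?_ (by linarith [paraboloidCap_le_one y])
  rcases le_total 1 ‖y‖ with hy | hy
  · rw [paraboloidCap_eq_zero hy]
    linarith [sq_nonneg ‖h‖]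
  · have hcap : paraboloidCap y = 1 - ‖y‖ ^ 2 :=
      max_eq_left (sub_nonneg.2 (pow_le_one₀ (norm_nonneg y) hy))
    have hadd' : 1 - ‖y + h‖ ^ 2 ≤ paraboloidCap (y + h) := le_max_left _ _
    have hsub' : 1 - ‖y - h‖ ^ 2 ≤ paraboloidCap (y - h) := le_max_left _ _
    linarith [parallelogram_law_with_norm ℝ y h]

lemma exists_almost_max_second_difference [ProperSpace E] {w : E → ℝ} (hw : Continuous w)
    {A : ℝ} (hA : ∀ y, w y ≤ A) {ε : ℝ} (hε : 0 ≤ ε) {x : E} (hx : A - ε < w x) :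
    ∃ z, A - ε < w z ∧
      ∀ h, -(2 * ε * min (‖h‖ ^ 2) 1) ≤ 2 * w z - w (z + h) - w (z - h) := by
  let φ : E → ℝ := fun y ↦ w y + ε * paraboloidCap (y - x)
  have hφ : Continuous φ :=
    hw.add ((continuous_paraboloidCap.comp (continuous_id.sub continuous_const)).const_mul ε)
  have hφx : φ x = w x + ε := by simp [φ, paraboloidCap_zero]
  have hφ_far : ∀ᶠ y in cocompact E, φ y ≤ φ x := by
    filter_upwards [(isCompact_closedBall x 1).compl_mem_cocompact] with y hy
    have hxy : 1 ≤ ‖y - x‖ := by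
      rw [← dist_eq_norm]
      exact (not_le.1 (mem_closedBall.not.1 hy)).le
    simp only [hφx, φ, paraboloidCap_eq_zero hxy, mul_zero, add_zero]
    linarith [hA y]
  obtain ⟨z, hz⟩ := hφ.exists_forall_ge' x hφ_far
  refine ⟨z, ?_, fun h ↦ ?_⟩
  · have hzx := hφx ▸ hz x
    linarith [mul_le_of_le_one_right hε (paraboloidCap_le_one (z - x))]
  · have hadd := hz (z + h)
    have hsub := hz (z - h)
    have hcap := mul_le_mul_of_nonneg_left (paraboloidCap_second_difference_le (z - x) h) hε
    simp only [φ, add_sub_right_comm z h x, sub_right_comm z h x] at hadd hsub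
    linarith

end SecondDifference

section KernelIntegrability

lemma integrableOn_Ioi_min_sq_one_mul_rpow {s : ℝ} (hs : s ∈ Ioo (0 : ℝ) 1) :
    IntegrableOn (fun r : ℝ ↦ min (r ^ 2) 1 * r ^ (-1 - 2 * s)) (Ioi 0) := by
  rw [← Ioc_union_Ioi_eq_Ioi zero_le_one, integrableOn_union]
  constructor
  · have hpow : IntegrableOn (fun r : ℝ ↦ r ^ (1 - 2 * s)) (Ioc 0 1) := by
      rw [← intervalIntegrable_iff_integrableOn_Ioc_of_le zero_le_one]
      exact intervalIntegral.intervalIntegrable_rpow' (by linarith [hs.2])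
    refine hpow.congr_fun (fun r hr ↦ ?_) measurableSet_Ioc
    have hexp : 1 - 2 * s = (2 : ℕ) + (-1 - 2 * s) := by
      push_cast
      ring
    simp only [min_eq_left (pow_le_one₀ hr.1.le hr.2), hexp, Real.rpow_add hr.1,
      Real.rpow_natCast]
  · have hpow : IntegrableOn (fun r : ℝ ↦ r ^ (-1 - 2 * s)) (Ioi 1) :=
      integrableOn_Ioi_rpow_of_lt (by linarith [hs.1]) one_pos
    refine hpow.congr_fun (fun r hr ↦ ?_) measurableSet_Ioi
    simp only [min_eq_right (one_le_pow₀ (mem_Ioi.1 hr).le), one_mul]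

lemma setIntegral_add_comp_neg {G : Type*} [InvolutiveNeg G] [MeasurableSpace G] [MeasurableNeg G]
    {μ : Measure G} [μ.IsNegInvariant] {S : Set G} (hS : -S = S) {g : G → ℝ}
    (hg : IntegrableOn g S μ) :
    ∫ h in S, (g h + g (-h)) ∂μ = 2 * ∫ h in S, g h ∂μ := by
  have hneg := Measure.measurePreserving_neg μ
  have hemb := (MeasurableEquiv.neg G).measurableEmbedding
  have hpre : Neg.neg ⁻¹' S = S := hS
  have hg_neg : IntegrableOn (fun h ↦ g (-h)) S μ := by
    have := (hneg.integrableOn_comp_preimage hemb).2 hg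
    rwa [hpre] at this
  have hint_neg : ∫ h in S, g (-h) ∂μ = ∫ h in S, g h ∂μ := by
    have := hneg.setIntegral_preimage_emb hemb g S
    rwa [hpre] at this
  rw [integral_add hg hg_neg, hint_neg, two_mul]

variable {E : Type*} [NormedAddCommGroup E] [MeasurableSpace E] [BorelSpace E]

lemma measurableSet_le_norm (ε : ℝ) : MeasurableSet {h : E | ε ≤ ‖h‖} :=
  measurableSet_le measurable_const measurable_norm

lemma tendsto_setIntegral_le_norm {F : Type*} [NormedAddCommGroup F] [NormedSpace ℝ F]
    {μ : Measure E} [NullSingletonClass μ] {g : E → F} (hg : Integrable g μ) :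
    Tendsto (fun ε : ℝ ↦ ∫ h in {h : E | ε ≤ ‖h‖}, g h ∂μ) (𝓝[>] 0) (𝓝 (∫ h, g h ∂μ)) := by
  have hcover : AECover μ (𝓝[>] (0 : ℝ)) fun ε ↦ {h : E | ε ≤ ‖h‖} :=
    { ae_eventually_mem := by
        filter_upwards [Measure.ae_ne μ 0] with h hh
        filter_upwards [Ioo_mem_nhdsGT (norm_pos_iff.2 hh)] with ε hε using hε.2.le
      measurableSet := measurableSet_le_norm }
  exact hcover.integral_tendsto_of_countably_generated hg

variable [NormedSpace ℝ E] [FiniteDimensional ℝ E] [Nontrivial E]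

lemma integrable_min_sq_one_div_norm_rpow (μ : Measure E) [μ.IsAddHaarMeasure] {s : ℝ}
    (hs : s ∈ Ioo (0 : ℝ) 1) :
    Integrable (fun h : E ↦ min (‖h‖ ^ 2) 1 / ‖h‖ ^ ((finrank ℝ E : ℝ) + 2 * s)) μ := by
  refine (integrable_fun_norm_addHaar μ
    (f := fun r : ℝ ↦ min (r ^ 2) 1 / r ^ ((finrank ℝ E : ℝ) + 2 * s))).2 ?_
  refine (integrableOn_Ioi_min_sq_one_mul_rpow hs).congr_fun (fun r hr ↦ ?_) measurableSet_Ioi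
  have hexp : -1 - 2 * s = ((finrank ℝ E - 1 : ℕ) : ℝ) - ((finrank ℝ E : ℝ) + 2 * s) := by
    rw [Nat.cast_pred finrank_pos]
    ring
  simp only [hexp, Real.rpow_sub hr, Real.rpow_natCast, smul_eq_mul]
  ring

end KernelIntegrability

section FractionalLaplacian

variable {n : ℕ} {s C B : ℝ}

/-- The weight `min(|h|², 1) / |h|^{n+2s}`: the kernel of the fractional Laplacian, tamed at the
origin so that it is integrable. It measures the contribution of bounded second differences. -/
def levyWeight (n : ℕ) (s : ℝ) (h : Pt n) : ℝ :=
  min (‖h‖ ^ 2) 1 / ‖h‖ ^ ((n : ℝ) + 2 * s)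

lemma levyWeight_nonneg (h : Pt n) : 0 ≤ levyWeight n s h := by
  unfold levyWeight
  positivity

lemma levyWeight_pos {h : Pt n} (hh : h ≠ 0) : 0 < levyWeight n s h := by
  unfold levyWeight
  positivity

lemma hasFracLap_iff_tendsto_norm {w : Pt n → ℝ} {z : Pt n} {L : ℝ} :
    HasFracLap n s C w z L ↔
      Tendsto (fun ε : ℝ ↦
        C * ∫ h in {h : Pt n | ε ≤ ‖h‖}, (w z - w (z + h)) / ‖h‖ ^ ((n : ℝ) + 2 * s))
        (𝓝[>] 0) (𝓝 L) := by
  unfold HasFracLap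
  refine iff_of_eq (congrArg (Tendsto · _ _) (funext fun ε ↦ congrArg (C * ·) ?_))
  rw [← (measurePreserving_add_left volume z).setIntegral_preimage_emb
    (MeasurableEquiv.addLeft z).measurableEmbedding]
  simp [dist_eq_norm]

lemma HasFracLap.comp_add_right {u : Pt n → ℝ} {z e : Pt n} {L : ℝ}
    (h : HasFracLap n s C u (z + e) L) : HasFracLap n s C (fun x ↦ u (x + e)) z L := by
  rw [hasFracLap_iff_tendsto_norm] at h ⊢
  simpa only [add_right_comm z e] using h

lemma C11loc.continuousOn {u : Pt n → ℝ} {D : Set (Pt n)} (hu : C11loc n u D) :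
    ContinuousOn u D := fun x hx ↦ by
  obtain ⟨ε, hε, -, hdiff, -⟩ := hu x hx
  exact (hdiff.differentiableAt (ball_mem_nhds x hε)).continuousAt.continuousWithinAt

variable [NeZero n]

lemma integrable_levyWeight (hs : s ∈ Ioo (0 : ℝ) 1) : Integrable (levyWeight n s) := by
  have := integrable_min_sq_one_div_norm_rpow (volume : Measure (Pt n)) hs
  rwa [finrank_euclideanSpace_fin] at this

lemma integrableOn_inv_norm_rpow (hs : s ∈ Ioo (0 : ℝ) 1) {ε : ℝ} (hε : 0 < ε) :
    IntegrableOn (fun h : Pt n ↦ (‖h‖ ^ ((n : ℝ) + 2 * s))⁻¹) {h | ε ≤ ‖h‖} := by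
  refine Integrable.mono' ((integrable_levyWeight hs).const_mul (min (ε ^ 2) 1)⁻¹).integrableOn
    (by fun_prop : Measurable _).aestronglyMeasurable ?_
  filter_upwards [ae_restrict_mem (measurableSet_le_norm ε)] with h hh
  have hmin : 0 < min (ε ^ 2) 1 := by positivity
  have hmono : min (ε ^ 2) 1 ≤ min (‖h‖ ^ 2) 1 := min_le_min_right _ (pow_le_pow_left₀ hε.le hh 2)
  rw [Real.norm_of_nonneg (by positivity), levyWeight, div_eq_mul_inv, ← mul_assoc]
  exact le_mul_of_one_le_left (by positivity) ((one_le_inv_mul₀ hmin).2 hmono)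

lemma integrableOn_sub_div_norm_rpow (hs : s ∈ Ioo (0 : ℝ) 1) {w : Pt n → ℝ} (hw : Measurable w)
    (hB : ∀ x, |w x| ≤ B) (z : Pt n) {ε : ℝ} (hε : 0 < ε) :
    IntegrableOn (fun h ↦ (w z - w (z + h)) / ‖h‖ ^ ((n : ℝ) + 2 * s)) {h | ε ≤ ‖h‖} := by
  refine (integrableOn_inv_norm_rpow hs hε).bdd_mul (c := B + B)
    (by fun_prop : Measurable _).aestronglyMeasurable ?_
  exact Eventually.of_forall fun h ↦ (abs_sub _ _).trans (add_le_add (hB _) (hB _))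

lemma HasFracLap.sub (hs : s ∈ Ioo (0 : ℝ) 1) {u v : Pt n → ℝ} (hu : Measurable u)
    (hv : Measurable v) {B' : ℝ} (huB : ∀ x, |u x| ≤ B) (hvB : ∀ x, |v x| ≤ B') {z : Pt n}
    {L L' : ℝ} (hL : HasFracLap n s C u z L) (hL' : HasFracLap n s C v z L') :
    HasFracLap n s C (fun x ↦ u x - v x) z (L - L') := by
  rw [hasFracLap_iff_tendsto_norm] at hL hL' ⊢
  refine (hL.sub hL').congr' ?_
  filter_upwards [self_mem_nhdsWithin] with ε hε
  rw [← mul_sub, ← integral_sub (integrableOn_sub_div_norm_rpow hs hu huB z hε)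
    (integrableOn_sub_div_norm_rpow hs hv hvB z hε)]
  congr 2 with h
  ring

/-- Symmetrizing `h ↦ -h` replaces first differences, whose integral exists only as a principal
value, by second differences, which are controlled by `levyWeight`. -/
lemma HasFracLap.tendsto_second_difference (hs : s ∈ Ioo (0 : ℝ) 1) {w : Pt n → ℝ}
    (hw : Measurable w) (hB : ∀ x, |w x| ≤ B) {z : Pt n} {L : ℝ} (hL : HasFracLap n s C w z L) :
    Tendsto (fun ε : ℝ ↦ C * ∫ h in {h : Pt n | ε ≤ ‖h‖},
        (2 * w z - w (z + h) - w (z - h)) / ‖h‖ ^ ((n : ℝ) + 2 * s))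
      (𝓝[>] 0) (𝓝 (2 * L)) := by
  refine ((hasFracLap_iff_tendsto_norm.1 hL).const_mul 2).congr' ?_
  filter_upwards [self_mem_nhdsWithin] with ε hε
  rw [mul_left_comm, ← setIntegral_add_comp_neg (by ext; simp)
    (integrableOn_sub_div_norm_rpow hs hw hB z hε)]
  congr 2 with h
  rw [norm_neg, ← add_div, ← sub_eq_add_neg]
  ring

lemma integrableOn_second_difference (hs : s ∈ Ioo (0 : ℝ) 1) {w : Pt n → ℝ} (hw : Measurable w)
    (hB : ∀ x, |w x| ≤ B) (z : Pt n) {ε : ℝ} (hε : 0 < ε) :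
    IntegrableOn (fun h ↦ (2 * w z - w (z + h) - w (z - h)) / ‖h‖ ^ ((n : ℝ) + 2 * s))
      {h | ε ≤ ‖h‖} := by
  refine (integrableOn_inv_norm_rpow hs hε).bdd_mul (c := 2 * B + B + B)
    (by fun_prop : Measurable _).aestronglyMeasurable ?_
  refine Eventually.of_forall fun h ↦ (abs_sub _ _).trans (add_le_add ?_ (hB _))
  refine (abs_sub _ _).trans (add_le_add ?_ (hB _))
  rw [abs_mul, abs_two]
  exact mul_le_mul_of_nonneg_left (hB z) zero_le_two

lemma HasFracLap.integral_le (hs : s ∈ Ioo (0 : ℝ) 1) (hC : 0 ≤ C) {w : Pt n → ℝ}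
    (hw : Measurable w) (hB : ∀ x, |w x| ≤ B) {z : Pt n} {L : ℝ} (hL : HasFracLap n s C w z L)
    {g : Pt n → ℝ} (hg : Integrable g)
    (hle : ∀ h, g h ≤ (2 * w z - w (z + h) - w (z - h)) / ‖h‖ ^ ((n : ℝ) + 2 * s)) :
    C * ∫ h, g h ≤ 2 * L := by
  refine le_of_tendsto_of_tendsto ((tendsto_setIntegral_le_norm hg).const_mul C)
    (hL.tendsto_second_difference hs hw hB) ?_
  filter_upwards [self_mem_nhdsWithin] with ε hε
  exact mul_le_mul_of_nonneg_left (setIntegral_mono hg.integrableOn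
    (integrableOn_second_difference hs hw hB z hε) hle) hC

lemma HasFracLap.mul_setIntegral_levyWeight_le (hs : s ∈ Ioo (0 : ℝ) 1) (hC : 0 < C)
    {w : Pt n → ℝ} (hw : Measurable w) (hB : ∀ x, |w x| ≤ B) {z : Pt n} {L : ℝ}
    (hL : HasFracLap n s C w z L) (hL_nonpos : L ≤ 0) {S : Set (Pt n)} (hS : MeasurableSet S)
    {a b : ℝ} (hle : ∀ h, (S.indicator (fun _ ↦ a) h - b) * min (‖h‖ ^ 2) 1 ≤
      2 * w z - w (z + h) - w (z - h)) :
    a * ∫ h in S, levyWeight n s h ≤ b * ∫ h, levyWeight n s h := by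
  have hweight := integrable_levyWeight (n := n) hs
  have hS_int : Integrable (S.indicator fun h ↦ a * levyWeight n s h) :=
    (hweight.const_mul a).indicator hS
  have hint := hL.integral_le hs hC.le hw hB (hS_int.sub (hweight.const_mul b)) fun h ↦ by
    have hfactor : S.indicator (fun h ↦ a * levyWeight n s h) h =
        S.indicator (fun _ ↦ a) h * levyWeight n s h := indicator_mul_left S _ _
    rw [Pi.sub_apply, hfactor, ← sub_mul, levyWeight, ← mul_div_assoc]
    exact div_le_div_of_nonneg_right (hle h) (by positivity)
  rw [integral_sub' hS_int (hweight.const_mul b), integral_indicator hS, integral_const_mul,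
    integral_const_mul] at hint
  linarith [nonpos_of_mul_nonpos_right (hint.trans (by linarith)) hC]

lemma setIntegral_levyWeight_pos (hs : s ∈ Ioo (0 : ℝ) 1) {S : Set (Pt n)} (hS : 0 < volume S) :
    0 < ∫ h in S, levyWeight n s h := by
  rw [setIntegral_pos_iff_support_of_nonneg_ae (Eventually.of_forall levyWeight_nonneg)
    (integrable_levyWeight hs).integrableOn]
  have hsupp : {(0 : Pt n)}ᶜ ⊆ Function.support (levyWeight n s) :=
    fun h hh ↦ (levyWeight_pos hh).ne'
  calc 0 < volume S := hS
    _ = volume (S \ {0}) := (measure_sdiff_null (measure_singleton 0)).symm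
    _ ≤ volume (Function.support (levyWeight n s) ∩ S) :=
      measure_mono fun h hh ↦ ⟨hsupp hh.2, hh.1⟩

end FractionalLaplacian

section MaximumPrinciple

variable {n : ℕ} {s C B : ℝ}

lemma nonpos_of_hasFracLap_nonpos [NeZero n] (hs : s ∈ Ioo (0 : ℝ) 1) (hC : 0 < C)
    {w : Pt n → ℝ} (hw : Continuous w) (hB : ∀ x, |w x| ≤ B)
    (hL : ∀ z, 0 < w z → ∃ L ≤ 0, HasFracLap n s C w z L)
    (hS : ∀ ε > 0, ∃ S, MeasurableSet S ∧ 0 < volume S ∧ ∀ z, ε < w z → ∀ h ∈ S, w (z + h) ≤ ε)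
    (x : Pt n) : w x ≤ 0 := by
  by_contra! hx
  have hbdd : BddAbove (range w) := ⟨B, forall_mem_range.2 fun y ↦ (abs_le.1 (hB y)).2⟩
  set A := ⨆ y, w y
  have hA : ∀ y, w y ≤ A := le_ciSup hbdd
  have hA_pos : 0 < A := hx.trans_le (hA x)
  obtain ⟨S, hS_meas, hS_pos, hS_le⟩ := hS (A / 2) (half_pos hA_pos)
  set m := ∫ h in S, levyWeight n s h
  set K := ∫ h, levyWeight n s h
  have hm : 0 < m := setIntegral_levyWeight_pos hs hS_pos
  have key : ∀ ε > 0, 4 * ε ≤ A → A / 2 * m ≤ 2 * ε * K := by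
    intro ε hε hεA
    obtain ⟨y, hy⟩ := exists_lt_of_lt_ciSup (sub_lt_self A hε)
    obtain ⟨z, hzA, hz⟩ := exists_almost_max_second_difference hw hA hε.le hy
    obtain ⟨L, hL_nonpos, hLz⟩ := hL z (by linarith)
    refine hLz.mul_setIntegral_levyWeight_le hs hC hw.measurable hB hL_nonpos hS_meas fun h ↦ ?_
    by_cases hh : h ∈ S
    · rw [indicator_of_mem hh]
      calc (A / 2 - 2 * ε) * min (‖h‖ ^ 2) 1
        _ ≤ A / 2 - 2 * ε := mul_le_of_le_one_right (by linarith) (min_le_right _ _)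
        _ ≤ 2 * w z - w (z + h) - w (z - h) := by
          linarith [hA (z - h), hS_le z (by linarith) h hh]
    · rw [indicator_of_notMem hh]
      linarith [hz h]
  obtain ⟨ε, hε, hεm⟩ := exists_pos_mul_lt (show 0 < A / 2 * m by positivity) (2 * K)
  have hK : 0 ≤ K := integral_nonneg levyWeight_nonneg
  have hle := key (min ε (A / 4)) (by positivity) (by linarith [min_le_right ε (A / 4)])
  nlinarith [min_le_left ε (A / 4)]

lemma nonpos_of_hasFracLap_nonpos_of_coord (hs : s ∈ Ioo (0 : ℝ) 1) (hC : 0 < C)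
    {w : Pt n → ℝ} (hw : Continuous w) (hB : ∀ x, |w x| ≤ B)
    (hL : ∀ z, 0 < w z → ∃ L ≤ 0, HasFracLap n s C w z L) (i : Fin n)
    (hlim : ∀ ε > 0, ∃ M, ∀ x : Pt n, M < |x i| → w x ≤ ε) (x : Pt n) : w x ≤ 0 := by
  have : NeZero n := i.neZero
  refine nonpos_of_hasFracLap_nonpos hs hC hw hB hL (fun ε hε ↦ ?_) x
  obtain ⟨M, hM⟩ := hlim ε hε
  have hopen : IsOpen {h : Pt n | 2 * M < h i} := isOpen_lt continuous_const (by fun_prop)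
  have hne : {h : Pt n | 2 * M < h i}.Nonempty :=
    ⟨EuclideanSpace.single i (2 * M + 1), by simp⟩
  refine ⟨_, hopen.measurableSet, hopen.measure_pos volume hne, fun z hz h hh ↦ hM _ ?_⟩
  have hzM : |z i| ≤ M := not_lt.1 fun hlt ↦ (hM z hlt).not_gt hz
  have hhM : 2 * M < h i := hh
  rw [PiLp.add_apply]
  linarith [(abs_le.1 hzM).1, le_abs_self (z i + h i)]

end MaximumPrinciple

section LargeTranslations

variable {n : ℕ} {s C : ℝ} {f : ℝ → ℝ} {u : Pt n → ℝ} {i : Fin n}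

lemma exists_forall_sub_translate_le
    (hlim : ∀ ε > (0 : ℝ), ∃ M > (0 : ℝ), ∀ x : Pt n,
      (M < x i → |u x - 1| < ε) ∧ (x i < -M → |u x + 1| < ε))
    (v : Pt n) {ε : ℝ} (hε : 0 < ε) : ∃ M, ∀ x : Pt n, M < |x i| → u x - u (x + v) ≤ ε := by
  obtain ⟨N, -, hN⟩ := hlim (ε / 2) (half_pos hε)
  refine ⟨N + |v i|, fun x hx ↦ ?_⟩
  have hadd : (x + v) i = x i + v i := PiLp.add_apply ..
  have hv := abs_le.1 (le_refl |v i|)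
  rcases lt_abs.1 hx with hx | hx
  · have h₁ := abs_lt.1 ((hN x).1 (by linarith))
    have h₂ := abs_lt.1 ((hN (x + v)).1 (by linarith))
    linarith
  · have h₁ := abs_lt.1 ((hN x).2 (by linarith))
    have h₂ := abs_lt.1 ((hN (x + v)).2 (by linarith))
    linarith

lemma apply_le_apply_of_translate_lt {δ M : ℝ} (hf₁ : AntitoneOn f (Icc (-1) (-1 + δ)))
    (hf₂ : AntitoneOn f (Icc (1 - δ) 1)) (hub : ∀ x, |u x| ≤ 1)
    (hM : ∀ x : Pt n, (M < x i → |u x - 1| < δ) ∧ (x i < -M → |u x + 1| < δ))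
    {v : Pt n} (hv : 2 * M < v i) {z : Pt n} (hz : u (z + v) < u z) :
    f (u z) ≤ f (u (z + v)) := by
  have hbz := abs_le.1 (hub z)
  have hbzv := abs_le.1 (hub (z + v))
  rcases lt_or_ge (z i) (-M) with hzM | hzM
  · have hnear := abs_lt.1 ((hM z).2 hzM)
    exact hf₁ ⟨hbzv.1, by linarith⟩ ⟨hbz.1, by linarith⟩ hz.le
  · have hnear := abs_lt.1 ((hM (z + v)).1 (by rw [PiLp.add_apply]; linarith))
    exact hf₂ ⟨by linarith, hbzv.2⟩ ⟨by linarith, hbz.2⟩ hz.le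

theorem comparison_large_translations_general (hs : s ∈ Ioo (0 : ℝ) 1) (hC : 0 < C)
    (hf : ∃ δ > (0 : ℝ), AntitoneOn f (Icc (-1) (-1 + δ)) ∧ AntitoneOn f (Icc (1 - δ) 1))
    (hu : Continuous u) (heq : ∀ x, HasFracLap n s C u x (f (u x))) (hub : ∀ x, |u x| ≤ 1)
    (hlim : ∀ ε > (0 : ℝ), ∃ M > (0 : ℝ), ∀ x : Pt n,
      (M < x i → |u x - 1| < ε) ∧ (x i < -M → |u x + 1| < ε)) :
    ∃ T > 0, ∀ v : Pt n, T ≤ v i → ∀ x, u x ≤ u (x + v) := by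
  have : NeZero n := i.neZero
  obtain ⟨δ, hδ, hf₁, hf₂⟩ := hf
  obtain ⟨M, hM_pos, hM⟩ := hlim δ hδ
  refine ⟨2 * M + 1, by linarith, fun v hv x ↦ sub_nonpos.1 ?_⟩
  have huv : Continuous fun x ↦ u (x + v) := by fun_prop
  refine nonpos_of_hasFracLap_nonpos_of_coord hs hC (hu.sub huv)
    (fun x ↦ (abs_sub _ _).trans (add_le_add (hub _) (hub _))) (fun z hz ↦ ?_) i
    (fun ε hε ↦ exists_forall_sub_translate_le hlim v hε) x
  exact ⟨_, sub_nonpos.2 (apply_le_apply_of_translate_lt hf₁ hf₂ hub hM (by linarith)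
    (sub_pos.1 hz)), (heq z).sub hs hu.measurable huv.measurable hub (fun x ↦ hub _)
    (heq (z + v)).comp_add_right⟩

end LargeTranslations

/-- Comparison for large translations in the `x_n` direction. -/
theorem comparison_large_translations
    (n : ℕ) (hn : 0 < n) (s : ℝ) (hs : s ∈ Set.Ioo (0 : ℝ) 1) (Cns : ℝ) (hCns : 0 < Cns)
    (f : ℝ → ℝ) (hfc : ContinuousOn f (Set.Icc (-1 : ℝ) 1))
    (hfmono : ∃ δ > (0 : ℝ), AntitoneOn f (Set.Icc (-1 : ℝ) (-1 + δ)) ∧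
      AntitoneOn f (Set.Icc (1 - δ) (1 : ℝ)))
    (u : Pt n → ℝ) (huL : MemL2s n s u) (huC : C11loc n u Set.univ)
    (heq : ∀ x : Pt n, HasFracLap n s Cns u x (f (u x)))
    (hub : ∀ x : Pt n, |u x| ≤ 1)
    (hlim : ∀ ε > (0 : ℝ), ∃ M > (0 : ℝ), ∀ x : Pt n,
      (M < x (lastIdx n hn) → |u x - 1| < ε) ∧ (x (lastIdx n hn) < -M → |u x + 1| < ε)) :
    ∃ T : ℝ, 0 < T ∧ ∀ τ : ℝ, T ≤ τ → ∀ x : Pt n, u x ≤ u (x + τ • eN n hn) := by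
  obtain ⟨T, hT, hle⟩ := comparison_large_translations_general hs hCns hfmono
    (continuousOn_univ.1 huC.continuousOn) heq hub hlim
  exact ⟨T, hT, fun τ hτ ↦ hle _ (by simpa [eN] using hτ)⟩
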